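/- Let σ_1, σ_2, σ_3 be the Pauli matrices and σ_0 = I the 2×2 identity, and define the Euclidean gamma matrices as the 4×4 complex matrices written in 2×2 blocks as γ_0 = [[0, I], [I, 0]] and γ_j = [[0, i σ_j], [-i σ_j, 0]] for j = 1,2,3. For a > 0 and k ∈ ℝ^4 define the Wilson–Dirac symbol (with Wilson parameter r = 1) D(k) = Σ_{μ=0}^3 i γ_0 γ_μ a^{-1} sin(k_μ a) + a^{-1} γ_0 Σ_{μ=0}^3 (1 - cos(k_μ a)). Then D(k)^* D(k) = [ Σ_μ a^{-2} sin^2(k_μ a) + ( a^{-1} Σ_μ (1 - cos(k_μ a)) )^2 ] · I_4, and for k ∈ [-π/a, π/a)^4 the matrix D(k) is invertible if and only if k ≠ 0. -/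

import Mathlib

open scoped Real
open Matrix

/-- The Pauli matrices `σ_1, σ_2, σ_3` (with `σ_0 = I` for convenience). -/
noncomputable def pauli : Fin 4 → Matrix (Fin 2) (Fin 2) ℂ :=
  ![1, !![0, 1; 1, 0], !![0, -Complex.I; Complex.I, 0], !![1, 0; 0, -1]]

/-- The Euclidean gamma matrices, written in `2×2` blocks as `γ_0 = [[0, I], [I, 0]]` and
`γ_j = [[0, i σ_j], [-i σ_j, 0]]` for `j = 1, 2, 3` (as `4×4` matrices via
`Fin 2 ⊕ Fin 2 ≃ Fin 4`). -/
noncomputable def gammaMat (μ : Fin 4) : Matrix (Fin 4) (Fin 4) ℂ :=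
  Matrix.reindex finSumFinEquiv finSumFinEquiv
    (if μ = 0 then Matrix.fromBlocks 0 1 1 0
     else Matrix.fromBlocks 0 (Complex.I • pauli μ) (-(Complex.I • pauli μ)) 0)

/-- The Wilson–Dirac symbol with Wilson parameter `r = 1`:
`D(k) = ∑_μ i γ_0 γ_μ a⁻¹ sin(k_μ a) + a⁻¹ γ_0 ∑_μ (1 - cos(k_μ a))`. -/
noncomputable def wilsonDirac (a : ℝ) (k : Fin 4 → ℝ) : Matrix (Fin 4) (Fin 4) ℂ :=
  (∑ μ : Fin 4, (Complex.I * ((Real.sin (k μ * a) / a : ℝ) : ℂ)) • (gammaMat 0 * gammaMat μ))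
    + (((a⁻¹ * ∑ μ : Fin 4, (1 - Real.cos (k μ * a)) : ℝ)) : ℂ) • gammaMat 0


theorem gammaMat_zero_eq : gammaMat 0 = !![0,0,1,0;0,0,0,1;1,0,0,0;0,1,0,0] := by
  ext i j
  fin_cases i <;> fin_cases j <;>
    simp [gammaMat, finSumFinEquiv, Fin.addCases, Matrix.one_apply]

theorem gammaMat_one_eq : gammaMat 1 =
    !![0,0,0,Complex.I;0,0,Complex.I,0;0,-Complex.I,0,0;-Complex.I,0,0,0] := by
  ext i j
  fin_cases i <;> fin_cases j <;>
    simp [gammaMat, pauli, finSumFinEquiv, Fin.addCases]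

theorem gammaMat_two_eq : gammaMat 2 = !![0,0,0,1;0,0,-1,0;0,-1,0,0;1,0,0,0] := by
  ext i j
  fin_cases i <;> fin_cases j <;>
    simp [gammaMat, pauli, finSumFinEquiv, Fin.addCases]

theorem gammaMat_three_eq : gammaMat 3 =
    !![0,0,Complex.I,0;0,0,0,-Complex.I;-Complex.I,0,0,0;0,Complex.I,0,0] := by
  ext i j
  fin_cases i <;> fin_cases j <;>
    simp [gammaMat, pauli, finSumFinEquiv, Fin.addCases]

/-- The symbol as an explicit matrix. -/
theorem wilsonDirac_explicit (s : Fin 4 → ℝ) (m : ℝ) :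
    (∑ μ : Fin 4, (Complex.I * ((s μ : ℝ) : ℂ)) • (gammaMat 0 * gammaMat μ))
      + (m : ℂ) • gammaMat 0 =
    !![Complex.I * s 0 + s 3, s 1 - Complex.I * s 2, (m : ℂ), 0;
       s 1 + Complex.I * s 2, Complex.I * s 0 - s 3, 0, (m : ℂ);
       (m : ℂ), 0, Complex.I * s 0 - s 3, -s 1 + Complex.I * s 2;
       0, (m : ℂ), -s 1 - Complex.I * s 2, Complex.I * s 0 + s 3] := by
  have hI := Complex.I_mul_I
  simp only [Fin.sum_univ_four, gammaMat_zero_eq, gammaMat_one_eq, gammaMat_two_eq,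
    gammaMat_three_eq]
  ext i j
  fin_cases i <;> fin_cases j <;>
    simp [Matrix.mul_apply, Fin.sum_univ_four] <;> grind

theorem wilsonDirac_sq (s : Fin 4 → ℝ) (m : ℝ) (D : Matrix (Fin 4) (Fin 4) ℂ)
    (hD : D = (∑ μ : Fin 4, (Complex.I * ((s μ : ℝ) : ℂ)) • (gammaMat 0 * gammaMat μ))
      + (m : ℂ) • gammaMat 0) :
    Dᴴ * D = ((∑ μ : Fin 4, s μ ^ 2 + m ^ 2 : ℝ) : ℂ) • (1 : Matrix (Fin 4) (Fin 4) ℂ) := by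
  have hI := Complex.I_mul_I
  rw [hD, wilsonDirac_explicit]
  ext i j
  fin_cases i <;> fin_cases j <;>
    simp [Matrix.mul_apply, Fin.sum_univ_four, Matrix.one_apply] <;> grind

/-- `D(k)* D(k) = (∑_μ a⁻² sin²(k_μ a) + (a⁻¹ ∑_μ (1 - cos(k_μ a)))²) I₄`, and for
`k ∈ [-π/a, π/a)⁴` the Wilson–Dirac matrix `D(k)` is invertible if and only if `k ≠ 0`:
absence of fermion doublers. -/
theorem wilsonDirac_no_doubling (a : ℝ) (ha : 0 < a) (k : Fin 4 → ℝ) :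
    (wilsonDirac a k)ᴴ * wilsonDirac a k =
        (((∑ μ : Fin 4, (Real.sin (k μ * a)) ^ 2 / a ^ 2 +
            (a⁻¹ * ∑ μ : Fin 4, (1 - Real.cos (k μ * a))) ^ 2 : ℝ)) : ℂ) •
          (1 : Matrix (Fin 4) (Fin 4) ℂ) ∧
      ((∀ μ, -(π / a) ≤ k μ ∧ k μ < π / a) →
        (IsUnit (wilsonDirac a k) ↔ k ≠ 0)) := by
  have key : (wilsonDirac a k)ᴴ * wilsonDirac a k =
        (((∑ μ : Fin 4, (Real.sin (k μ * a)) ^ 2 / a ^ 2 +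
            (a⁻¹ * ∑ μ : Fin 4, (1 - Real.cos (k μ * a))) ^ 2 : ℝ)) : ℂ) •
          (1 : Matrix (Fin 4) (Fin 4) ℂ) := by
    have h := wilsonDirac_sq (fun μ => Real.sin (k μ * a) / a)
      (a⁻¹ * ∑ μ : Fin 4, (1 - Real.cos (k μ * a))) (wilsonDirac a k) rfl
    simp only [div_pow] at h
    exact h
  refine ⟨key, fun hk => ⟨?_, ?_⟩⟩
  · rintro hu rfl
    have h0 : wilsonDirac a 0 = 0 := by simp [wilsonDirac]
    rw [h0] at hu
    exact not_isUnit_zero hu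
  · intro hne
    set c : ℝ := ∑ μ : Fin 4, (Real.sin (k μ * a)) ^ 2 / a ^ 2 +
            (a⁻¹ * ∑ μ : Fin 4, (1 - Real.cos (k μ * a))) ^ 2 with hc
    have hnn : ∀ μ : Fin 4, 0 ≤ 1 - Real.cos (k μ * a) := fun μ =>
      sub_nonneg.mpr (Real.cos_le_one _)
    have hpos : 0 < ∑ μ : Fin 4, (1 - Real.cos (k μ * a)) := by
      obtain ⟨ν, hν⟩ := Function.ne_iff.mp hne
      refine Finset.sum_pos' (fun μ _ => hnn μ) ⟨ν, Finset.mem_univ _, ?_⟩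
      refine lt_of_le_of_ne (hnn ν) fun h => hν ?_
      have h1 : Real.cos (k ν * a) = 1 := by linarith
      have hl : -π ≤ k ν * a := by
        have := mul_le_mul_of_nonneg_right (hk ν).1 ha.le
        rwa [neg_mul, div_mul_cancel₀ _ ha.ne'] at this
      have hr : k ν * a < π := by
        have := mul_lt_mul_of_pos_right (hk ν).2 ha
        rwa [div_mul_cancel₀ _ ha.ne'] at this
      have := (Real.cos_eq_one_iff_of_lt_of_lt (by linarith [Real.pi_pos])
        (by linarith [Real.pi_pos])).mp h1
      simpa [ha.ne'] using this
    have hcpos : 0 < c := by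
      have : 0 < a⁻¹ * ∑ μ : Fin 4, (1 - Real.cos (k μ * a)) := by positivity
      have h2 : 0 ≤ ∑ μ : Fin 4, (Real.sin (k μ * a)) ^ 2 / a ^ 2 := by positivity
      positivity
    have hcc : (c : ℂ) ≠ 0 := by exact_mod_cast hcpos.ne'
    apply IsUnit.of_mul_eq_one_right ((c : ℂ)⁻¹ • (wilsonDirac a k)ᴴ)
    rw [smul_mul_assoc, key, smul_smul, inv_mul_cancel₀ hcc, one_smul]
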